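/- Let μ be a probability measure on a measurable space Ω₁ with measurable sets E₁, F₁ ⊆ Ω₁, and let ν be a probability measure on a measurable space Ω₂ with measurable sets E₂, F₂ ⊆ Ω₂. If μ(E₁ ∣ F₁ᶜ) = ν(E₂ ∣ F₂ᶜ), then |μ(E₁) − ν(E₂)| ≤ 2·μ(F₁) + 2·ν(F₂). -/

import Mathlib

/-!
In each game the unconditioned output probability differs from the one conditioned on the
complement of the Find event by at most the probability of Find
(`abs_measureReal_sub_cond_compl_le`). The two conditional probabilities agree, so the triangle
inequality gives the bound `μ F₁ + ν F₂`, which is stronger than the claimed one.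
-/

open MeasureTheory ProbabilityTheory

/-- Conditioning on the complement of `F` moves the probability of any event by at most `μ F`.
By total probability `μ E - μ[E | Fᶜ] = (μ[E | F] - μ[E | Fᶜ]) * μ F`, and both conditional
probabilities lie in `[0, 1]`, also in the degenerate cases `μ F = 0` and `μ F = 1`. -/
lemma abs_measureReal_sub_cond_compl_le {Ω : Type*} [MeasurableSpace Ω] (μ : Measure Ω)
    [IsProbabilityMeasure μ] (E : Set Ω) {F : Set Ω} (hF : MeasurableSet F) :
    |(μ E).toReal - (μ[E | Fᶜ]).toReal| ≤ (μ F).toReal := by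
  have total : (μ[E | F]).toReal * (μ F).toReal + (μ[E | Fᶜ]).toReal * (μ Fᶜ).toReal
      = (μ E).toReal := by
    rw [← cond_add_cond_compl_eq (t := E) hF μ, ENNReal.toReal_add (by finiteness) (by finiteness),
      ENNReal.toReal_mul, ENNReal.toReal_mul]
  have compl : (μ Fᶜ).toReal = 1 - (μ F).toReal := probReal_compl_eq_one_sub hF
  have cond_le_one (s : Set Ω) : (μ[E | s]).toReal ≤ 1 := measureReal_le_one
  have key : (μ E).toReal - (μ[E | Fᶜ]).toReal
      = ((μ[E | F]).toReal - (μ[E | Fᶜ]).toReal) * (μ F).toReal := by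
    rw [← total, compl]; ring
  rw [key, abs_mul, abs_of_nonneg (ENNReal.toReal_nonneg (a := μ F))]
  refine mul_le_of_le_one_left ENNReal.toReal_nonneg ?_
  exact abs_sub_le_of_nonneg_of_le ENNReal.toReal_nonneg (cond_le_one F)
    ENNReal.toReal_nonneg (cond_le_one Fᶜ)

/-- Distinguishing almost identical punctured oracles: if the output distributions of two
games conditioned on the respective "Find" events not occurring coincide, then the
distinguishing advantage is at most `2·μ F₁ + 2·ν F₂`. -/
theorem almost_identical_oracles_distinguish
    {Ω₁ Ω₂ : Type*} [MeasurableSpace Ω₁] [MeasurableSpace Ω₂]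
    (μ : Measure Ω₁) (ν : Measure Ω₂) [IsProbabilityMeasure μ] [IsProbabilityMeasure ν]
    (E₁ F₁ : Set Ω₁) (E₂ F₂ : Set Ω₂)
    (hE₁ : MeasurableSet E₁) (hF₁ : MeasurableSet F₁)
    (hE₂ : MeasurableSet E₂) (hF₂ : MeasurableSet F₂)
    (h : μ[E₁ | F₁ᶜ] = ν[E₂ | F₂ᶜ]) :
    |(μ E₁).toReal - (ν E₂).toReal| ≤ 2 * (μ F₁).toReal + 2 * (ν F₂).toReal := by
  have h₁ := abs_measureReal_sub_cond_compl_le μ E₁ hF₁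
  have h₂ := abs_measureReal_sub_cond_compl_le ν E₂ hF₂
  rw [h] at h₁
  rw [abs_sub_comm] at h₂
  have tri := abs_sub_le (μ E₁).toReal (ν[E₂ | F₂ᶜ]).toReal (ν E₂).toReal
  have f₁ : 0 ≤ (μ F₁).toReal := ENNReal.toReal_nonneg
  have f₂ : 0 ≤ (ν F₂).toReal := ENNReal.toReal_nonneg
  linarith
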